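/- arXiv:1004.3608 — 10 statements merged into one kernel-verified Lean document; each statement's English description precedes it below -/
import Mathlib

section
/- Let φ : ℝ → ℝ be positive and monotonic increasing for all sufficiently large x. Suppose that for SOME α ∈ (0,1) there exists K > 0 such that for all sufficiently large x and every finite sequence x₀, …, x_J of reals with 1 ≤ x_j ≤ α^j·x for each j = 0, …, J, one has ∑_{j=0}^J φ(x_j) ≤ K·φ(x). Then the same conclusion holds for EVERY α ∈ (0,1): for every α₁ ∈ (0,1) there exists K₁ > 0 such that for all sufficiently large x and every finite sequence x₀, …, x_J with 1 ≤ x_j ≤ α₁^j·x for each j, one has ∑_{j=0}^J φ(x_j) ≤ K₁·φ(x). -/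
/-!
Choose `m` with `α₁ ^ m < α` and split the index set into residue classes modulo `m`. Along the
class of `r`, the terms satisfy `x_{qm+r} ≤ α₁ ^ (qm+r) x ≤ α ^ q x`, so the hypothesis for `α`
bounds their sum by `K φ(x)`. Summing over the `m` classes gives the constant `K₁ = m K`. Positivity
of `φ x` is used only for the classes that contain no index `≤ J`; nothing is needed about the
sign or monotonicity of `φ` at the terms `x_j` themselves.
-/

/-- A residue class modulo `m`, cut off at `J`, is the arithmetic progression `q * m + r`. -/
theorem sum_residue_class_eq (f : ℕ → ℝ) {m r J : ℕ} (hr : r < m) (hrJ : r ≤ J) :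
    ∑ j ∈ Finset.range (J + 1) with j % m = r, f j
      = ∑ q ∈ Finset.range ((J - r) / m + 1), f (q * m + r) := by
  have hm : 0 < m := by omega
  have hdecomp : ∀ j, j % m = r → j / m * m + r = j := fun j hj => by
    rw [← hj]; exact Nat.div_add_mod' j m
  refine Finset.sum_bij' (fun j _ => j / m) (fun q _ => q * m + r) ?_ ?_ ?_ ?_ ?_
  · intro j hj
    simp only [Finset.mem_filter, Finset.mem_range] at hj
    have := hdecomp j hj.2
    rw [Finset.mem_range, Nat.lt_succ_iff, Nat.le_div_iff_mul_le hm]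
    omega
  · intro q hq
    rw [Finset.mem_range, Nat.lt_succ_iff, Nat.le_div_iff_mul_le hm] at hq
    simp only [Finset.mem_filter, Finset.mem_range]
    refine ⟨by omega, ?_⟩
    rw [Nat.mul_add_mod_self_right, Nat.mod_eq_of_lt hr]
  · intro j hj
    exact hdecomp j (Finset.mem_filter.1 hj).2
  · intro q _
    rw [mul_comm, Nat.mul_add_div hm, Nat.div_eq_of_lt hr, add_zero]
  · intro j hj
    rw [hdecomp j (Finset.mem_filter.1 hj).2]

/-- Lemma 4.1 of Brent, "The complexity of multiple-precision arithmetic":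
if the defining condition of the class `Φ₁` holds for SOME `α ∈ (0,1)`,
then it holds for EVERY `α₁ ∈ (0,1)`. -/
theorem phi1_some_implies_all (φ : ℝ → ℝ)
    (hφ : ∃ X : ℝ, ∀ x y : ℝ, X ≤ x → x ≤ y → 0 < φ x ∧ φ x ≤ φ y)
    (h : ∃ α ∈ Set.Ioo (0 : ℝ) 1, ∃ K > (0 : ℝ), ∃ X₀ : ℝ, ∀ x ≥ X₀,
        ∀ J : ℕ, ∀ xs : ℕ → ℝ,
          (∀ j ≤ J, 1 ≤ xs j ∧ xs j ≤ α ^ j * x) →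
          ∑ j ∈ Finset.range (J + 1), φ (xs j) ≤ K * φ x) :
    ∀ α₁ ∈ Set.Ioo (0 : ℝ) 1, ∃ K₁ > (0 : ℝ), ∃ X₁ : ℝ, ∀ x ≥ X₁,
        ∀ J : ℕ, ∀ xs : ℕ → ℝ,
          (∀ j ≤ J, 1 ≤ xs j ∧ xs j ≤ α₁ ^ j * x) →
          ∑ j ∈ Finset.range (J + 1), φ (xs j) ≤ K₁ * φ x := by
  intro α₁ hα₁
  obtain ⟨X, hX⟩ := hφ
  obtain ⟨α, hα, K, hK, X₀, hX₀⟩ := h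
  obtain ⟨m, hmα⟩ := exists_pow_lt_of_lt_one hα.1 hα₁.2
  have hm : 0 < m := by
    rcases Nat.eq_zero_or_pos m with rfl | h0
    · have := hα.2
      rw [pow_zero] at hmα
      linarith
    · exact h0
  refine ⟨m * K, by positivity, max (max X X₀) 0, fun x hx J xs hxs => ?_⟩
  have hxX : X ≤ x := (le_max_left _ _).trans ((le_max_left _ _).trans hx)
  have hxX₀ : X₀ ≤ x := (le_max_right _ _).trans ((le_max_left _ _).trans hx)
  have hx0 : 0 ≤ x := (le_max_right _ _).trans hx
  have hφx : 0 < φ x := (hX x x hxX le_rfl).1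
  have hclass : ∀ r ∈ Finset.range m,
      ∑ j ∈ Finset.range (J + 1) with j % m = r, φ (xs j) ≤ K * φ x := by
    intro r hr
    rw [Finset.mem_range] at hr
    by_cases hrJ : r ≤ J
    · rw [sum_residue_class_eq (fun j => φ (xs j)) hr hrJ]
      refine hX₀ x hxX₀ _ (fun q => xs (q * m + r)) fun q hq => ?_
      rw [Nat.le_div_iff_mul_le hm] at hq
      obtain ⟨h1, h2⟩ := hxs (q * m + r) (by omega)
      refine ⟨h1, h2.trans (mul_le_mul_of_nonneg_right ?_ hx0)⟩
      calc α₁ ^ (q * m + r) ≤ α₁ ^ (m * q) :=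
            pow_le_pow_of_le_one hα₁.1.le hα₁.2.le (by rw [mul_comm]; omega)
        _ = (α₁ ^ m) ^ q := pow_mul _ _ _
        _ ≤ α ^ q := pow_le_pow_left₀ (pow_nonneg hα₁.1.le m) hmα.le q
    · rw [Finset.filter_false_of_mem, Finset.sum_empty]
      · positivity
      · intro j hj hjr
        have := Nat.mod_le j m
        rw [Finset.mem_range] at hj
        omega
  calc ∑ j ∈ Finset.range (J + 1), φ (xs j)
      = ∑ r ∈ Finset.range m, ∑ j ∈ Finset.range (J + 1) with j % m = r, φ (xs j) :=
        (Finset.sum_fiberwise_of_maps_to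
          (fun j _ => Finset.mem_range.2 (Nat.mod_lt j hm)) _).symm
    _ ≤ ∑ _r ∈ Finset.range m, K * φ x := Finset.sum_le_sum hclass
    _ = m * K * φ x := by
        rw [Finset.sum_const, Finset.card_range, nsmul_eq_mul, mul_assoc]
end

section
/- Let φ : ℝ → ℝ be positive and monotonic increasing for all sufficiently large x, and suppose there exist constants K₁, K₂, p > 0 and a monotonic increasing function ψ : ℝ → ℝ such that K₁·x^p·ψ(x) ≤ φ(x) ≤ K₂·x^p·ψ(x) for all sufficiently large x (i.e. φ ∈ Φ₃). Then φ ∈ Φ₂: there exist α, β ∈ (0,1) such that φ(α·x) ≤ β·φ(x) for all sufficiently large x. -/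
/-!
For `0 < α < 1` and `x` large, the upper bound at `α * x`, monotonicity of `ψ` and the lower bound
at `x` give `φ (α * x) ≤ K₂ * α ^ p * x ^ p * ψ x ≤ (K₂ * α ^ p / K₁) * φ x`. Taking
`α ^ p = K₁ / (K₁ + K₂)` makes the last factor `K₂ / (K₁ + K₂) < 1`. No sign condition on `ψ` is
needed, since the bounds are only ever multiplied by nonnegative constants.
-/

/-- Half of Lemma 4.3 of Brent, "The complexity of multiple-precision
arithmetic": `Φ₃ ⊆ Φ₂`.  If `K₁·x^p·ψ(x) ≤ φ(x) ≤ K₂·x^p·ψ(x)` for all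
sufficiently large `x`, with `K₁, K₂, p > 0` and `ψ` monotonic increasing,
then there are `α, β ∈ (0,1)` with `φ(α·x) ≤ β·φ(x)` for all sufficiently
large `x`. -/
theorem phi3_subset_phi2 (φ : ℝ → ℝ)
    (hφ : ∃ X : ℝ, ∀ x y : ℝ, X ≤ x → x ≤ y → 0 < φ x ∧ φ x ≤ φ y)
    (h : ∃ K₁ > (0 : ℝ), ∃ K₂ > (0 : ℝ), ∃ p > (0 : ℝ), ∃ ψ : ℝ → ℝ,
        Monotone ψ ∧ ∃ X₀ : ℝ, ∀ x ≥ X₀,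
          K₁ * x ^ p * ψ x ≤ φ x ∧ φ x ≤ K₂ * x ^ p * ψ x) :
    ∃ α ∈ Set.Ioo (0 : ℝ) 1, ∃ β ∈ Set.Ioo (0 : ℝ) 1, ∃ X₁ : ℝ,
      ∀ x ≥ X₁, φ (α * x) ≤ β * φ x := by
  obtain ⟨K₁, hK₁, K₂, hK₂, p, hp, ψ, hψ, X₀, hX⟩ := h
  -- `c` is the value of `α ^ p`; it is chosen so that both `c` and `β = K₂ * c / K₁` are below `1`.
  have hc0 : 0 < K₁ / (K₁ + K₂) := by positivity
  have hc1 : K₁ / (K₁ + K₂) < 1 := by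
    rw [div_lt_one (by positivity)]; linarith
  set c := K₁ / (K₁ + K₂) with hc
  have hα0 : 0 < c ^ p⁻¹ := Real.rpow_pos_of_pos hc0 _
  have hα1 : c ^ p⁻¹ < 1 := Real.rpow_lt_one hc0.le hc1 (inv_pos.2 hp)
  have hαp : (c ^ p⁻¹) ^ p = c := Real.rpow_inv_rpow hc0.le hp.ne'
  set α := c ^ p⁻¹
  refine ⟨α, ⟨hα0, hα1⟩, K₂ / (K₁ + K₂), ⟨by positivity, ?_⟩, max 0 (max X₀ (X₀ / α)), ?_⟩
  · rw [div_lt_one (by positivity)]; linarith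
  intro x hx
  have hx0 : 0 ≤ x := (le_max_left _ _).trans hx
  have hxX : X₀ ≤ x := (le_max_left _ _).trans ((le_max_right _ _).trans hx)
  have hαx : X₀ ≤ α * x := by
    have : X₀ / α ≤ x := (le_max_right _ _).trans ((le_max_right _ _).trans hx)
    rwa [div_le_iff₀' hα0] at this
  have hle : α * x ≤ x := mul_le_of_le_one_left hx0 hα1.le
  calc φ (α * x) ≤ K₂ * (α * x) ^ p * ψ (α * x) := (hX _ hαx).2
    _ ≤ K₂ * (α * x) ^ p * ψ x :=
        mul_le_mul_of_nonneg_left (hψ hle) (by positivity)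
    _ = K₂ / (K₁ + K₂) * (K₁ * x ^ p * ψ x) := by
        rw [Real.mul_rpow hα0.le hx0, hαp, hc]; ring
    _ ≤ K₂ / (K₁ + K₂) * φ x :=
        mul_le_mul_of_nonneg_left (hX x hxX).1 (by positivity)
end

section
/- Let φ : ℝ → ℝ be positive and monotonic increasing for all sufficiently large x, and suppose there exist α, β ∈ (0,1) such that φ(α·x) ≤ β·φ(x) for all sufficiently large x (i.e. φ ∈ Φ₂). Then φ ∈ Φ₃: there exist constants K₁, K₂, p > 0 and a monotonic increasing function ψ : ℝ → ℝ such that K₁·x^p·ψ(x) ≤ φ(x) ≤ K₂·x^p·ψ(x) for all sufficiently large x. -/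
/-!
Choose `p > 0` with `α ^ p = β`. The hypothesis then says that `f x = φ x / x ^ p` satisfies
`f (α * x) ≤ f x` for large `x`. Given `x ≤ y`, repeated multiplication of `y` by `α` reaches a
point `z` with `x ≤ z` and `α * z < x` without increasing `f`, and monotonicity of `φ` gives
`β * f x ≤ f z`. Hence `β * f x ≤ f y` for all large `x ≤ y` (`beta_mul_le`): `f` is increasing
up to a constant factor. So `ψ x = inf {f y | y ≥ x}` is increasing and satisfies
`ψ ≤ f ≤ β⁻¹ * ψ`, which is the claim with `K₁ = 1` and `K₂ = β⁻¹`.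
-/

/-- The ratio `φ x / x ^ p` is increasing up to the factor `β`, in a form free of division. -/
lemma beta_mul_le {φ : ℝ → ℝ} {α β p X : ℝ} (hα : 0 < α) (hα1 : α < 1) (hβ : 0 < β) (hβ1 : β < 1)
    (hp : 0 < p) (hαp : α ^ p = β) (hX : 0 < X)
    (hφ : ∀ x y : ℝ, X ≤ x → x ≤ y → 0 < φ x ∧ φ x ≤ φ y)
    (h : ∀ x ≥ X, φ (α * x) ≤ β * φ x) {x y : ℝ} (hx : X ≤ x) (hxy : x ≤ y) :
    β * (φ x * y ^ p) ≤ φ y * x ^ p := by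
  have hx0 : 0 < x := hX.trans_le hx
  -- Induction on the number of multiplications by `α` that bring `y` down to `x` or below.
  have key : ∀ n : ℕ, ∀ y : ℝ, x ≤ y → α ^ n * y ≤ x → β * (φ x * y ^ p) ≤ φ y * x ^ p := by
    intro n
    induction n with
    | zero =>
      intro y hxy hy
      obtain rfl : x = y := le_antisymm hxy (by simpa using hy)
      have h1 : 0 < φ x * x ^ p := mul_pos (hφ x x hx le_rfl).1 (Real.rpow_pos_of_pos hx0 p)
      nlinarith
    | succ n ih =>
      intro y hxy hy
      have hy0 : 0 < y := hx0.trans_le hxy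
      have hmul : (α * y) ^ p = β * y ^ p := by rw [Real.mul_rpow hα.le hy0.le, hαp]
      have hxp : 0 < x ^ p := Real.rpow_pos_of_pos hx0 p
      rcases le_total x (α * y) with hc | hc
      · have h1 := ih (α * y) hc (by rw [← mul_assoc, ← pow_succ]; exact hy)
        rw [hmul] at h1
        have h2 := mul_le_mul_of_nonneg_right (h y (hx.trans hxy)) hxp.le
        refine le_of_mul_le_mul_left ?_ hβ
        linarith
      · have h1 : β * y ^ p ≤ x ^ p := by
          rw [← hmul]
          exact Real.rpow_le_rpow (by positivity) hc hp.le
        obtain ⟨h2, h3⟩ := hφ x y hx hxy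
        calc β * (φ x * y ^ p) = φ x * (β * y ^ p) := by ring
          _ ≤ φ x * x ^ p := mul_le_mul_of_nonneg_left h1 h2.le
          _ ≤ φ y * x ^ p := mul_le_mul_of_nonneg_right h3 hxp.le
  have hy0 : 0 < y := hx0.trans_le hxy
  obtain ⟨n, hn⟩ := exists_pow_lt_of_lt_one (div_pos hx0 hy0) hα1
  exact key n y hxy ((lt_div_iff₀ hy0).1 hn).le


/-- Half of Lemma 4.3 of Brent, "The complexity of multiple-precision
arithmetic": `Φ₂ ⊆ Φ₃`.  If `φ(α·x) ≤ β·φ(x)` for some `α, β ∈ (0,1)` and all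
sufficiently large `x`, then there are constants `K₁, K₂, p > 0` and a
monotonic increasing `ψ` with `K₁·x^p·ψ(x) ≤ φ(x) ≤ K₂·x^p·ψ(x)` for all
sufficiently large `x`. -/
theorem phi2_subset_phi3 (φ : ℝ → ℝ)
    (hφ : ∃ X : ℝ, ∀ x y : ℝ, X ≤ x → x ≤ y → 0 < φ x ∧ φ x ≤ φ y)
    (h : ∃ α ∈ Set.Ioo (0 : ℝ) 1, ∃ β ∈ Set.Ioo (0 : ℝ) 1, ∃ X₀ : ℝ,
        ∀ x ≥ X₀, φ (α * x) ≤ β * φ x) :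
    ∃ K₁ > (0 : ℝ), ∃ K₂ > (0 : ℝ), ∃ p > (0 : ℝ), ∃ ψ : ℝ → ℝ,
      Monotone ψ ∧ ∃ X₁ : ℝ, ∀ x ≥ X₁,
        K₁ * x ^ p * ψ x ≤ φ x ∧ φ x ≤ K₂ * x ^ p * ψ x := by
  obtain ⟨X, hφ⟩ := hφ
  obtain ⟨α, ⟨hα, hα1⟩, β, ⟨hβ, hβ1⟩, X₀, h⟩ := h
  obtain ⟨p, hp, hαp⟩ : ∃ p : ℝ, 0 < p ∧ α ^ p = β := by
    refine ⟨Real.log β / Real.log α,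
      div_pos_of_neg_of_neg (Real.log_neg hβ hβ1) (Real.log_neg hα hα1), ?_⟩
    rw [Real.rpow_def_of_pos hα, mul_div_cancel₀ _ (Real.log_neg hα hα1).ne, Real.exp_log hβ]
  set M : ℝ := max (max X X₀) 1
  have hMX : X ≤ M := (le_max_left _ _).trans (le_max_left _ _)
  have hMX₀ : X₀ ≤ M := (le_max_right _ _).trans (le_max_left _ _)
  have hM : 0 < M := zero_lt_one.trans_le (le_max_right _ _)
  have hquasi {x y : ℝ} (hx : M ≤ x) (hxy : x ≤ y) : β * (φ x * y ^ p) ≤ φ y * x ^ p :=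
    beta_mul_le hα hα1 hβ hβ1 hp hαp hM (fun x y hx hxy => hφ x y (hMX.trans hx) hxy)
      (fun x hx => h x (hMX₀.trans hx)) hx hxy
  -- Truncating at `M` keeps the infimum over a set bounded below, so `ψ` is monotone on all of `ℝ`.
  set S : ℝ → Set ℝ := fun x => (fun y => φ y / y ^ p) '' Set.Ici (max x M) with hS
  have hne (x : ℝ) : (S x).Nonempty := Set.nonempty_Ici.image _
  have hbdd (x : ℝ) : BddBelow (S x) := by
    refine ⟨0, ?_⟩
    rintro _ ⟨y, hy, rfl⟩
    have hy' : M ≤ y := (le_max_right _ _).trans hy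
    exact div_nonneg (hφ y y (hMX.trans hy') le_rfl).1.le (Real.rpow_nonneg (hM.le.trans hy') p)
  refine ⟨1, one_pos, β⁻¹, inv_pos.2 hβ, p, hp, fun x => sInf (S x), ?_, M, ?_⟩
  · intro a b hab
    exact csInf_le_csInf (hbdd a) (hne b)
      (Set.image_mono (Set.Ici_subset_Ici.2 (max_le_max_right M hab)))
  · intro x hx
    have hxp : 0 < x ^ p := Real.rpow_pos_of_pos (hM.trans_le hx) p
    constructor
    · have h1 : sInf (S x) ≤ φ x / x ^ p :=
        csInf_le (hbdd x) ⟨x, max_le le_rfl hx, rfl⟩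
      rw [le_div_iff₀ hxp] at h1
      linarith
    · have h1 : β * φ x / x ^ p ≤ sInf (S x) := by
        refine le_csInf (hne x) ?_
        rintro _ ⟨y, hy, rfl⟩
        have hxy : x ≤ y := (le_max_left _ _).trans hy
        have hyp : 0 < y ^ p := Real.rpow_pos_of_pos ((hM.trans_le hx).trans_le hxy) p
        rw [div_le_div_iff₀ hxp hyp, mul_assoc]
        exact hquasi hx hxy
      rw [div_le_iff₀ hxp] at h1
      rw [mul_assoc, le_inv_mul_iff₀ hβ]
      linarith
end

section
/- Let a < b be reals, let f : ℝ → ℝ be twice differentiable on [a,b] with second derivative f'' Lipschitz continuous on [a,b] with Lipschitz constant L, and let x₀ ∈ (a,b) and h ∈ ℝ be such that x₀ + h and x₀ − h both lie in [a,b]. Then |f(x₀+h) + f(x₀−h) − 2·f(x₀) − h²·f''(x₀)| ≤ L·|h|³. -/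
/-!
Replacing `h` by `-h` changes nothing, so let `h ≥ 0` and set
`G t = f (x₀ + t) + f (x₀ - t) - 2 f x₀ - t² f'' x₀` on `[0, h]`. Then `G 0 = G' 0 = 0`, and the
Lipschitz condition gives `|G'' t| = |f'' (x₀ + t) + f'' (x₀ - t) - 2 f'' x₀| ≤ 2 L t`.
Integrating this bound twice by the mean value inequality (`abs_le_of_abs_deriv_le`) gives
`|G' t| ≤ L t²` and `|G t| ≤ L t³ / 3 ≤ L t³`.
-/

/-- Mean value inequality with a variable bound `B'` on the derivative, for functions vanishing
at the left endpoint `0`. -/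
lemma abs_le_of_abs_deriv_le {k : ℝ} {g g' B B' : ℝ → ℝ}
    (hc : ContinuousOn g (Set.Icc 0 k))
    (hd : ∀ t ∈ Set.Ico 0 k, HasDerivAt g (g' t) t)
    (h0 : g 0 = 0) (hB0 : B 0 = 0) (hB : ∀ t, HasDerivAt B (B' t) t)
    (hb : ∀ t ∈ Set.Ico 0 k, |g' t| ≤ B' t) :
    ∀ t ∈ Set.Icc 0 k, |g t| ≤ B t := fun t ht =>
  image_norm_le_of_norm_deriv_right_le_deriv_boundary hc
    (fun s hs => (hd s hs).hasDerivWithinAt) (by simp [h0, hB0]) hB hb ht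

/-- The estimate for `h ≥ 0`, with the sharper constant `L / 3`. -/
lemma second_difference_estimate_of_nonneg (a b L x₀ h : ℝ) (f f' f'' : ℝ → ℝ)
    (hf' : ∀ x ∈ Set.Icc a b, HasDerivWithinAt f (f' x) (Set.Icc a b) x)
    (hf'' : ∀ x ∈ Set.Icc a b, HasDerivWithinAt f' (f'' x) (Set.Icc a b) x)
    (hL : ∀ x ∈ Set.Icc a b, ∀ y ∈ Set.Icc a b, |f'' x - f'' y| ≤ L * |x - y|)
    (hx₀ : x₀ ∈ Set.Ioo a b) (hh : 0 ≤ h)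
    (hp : x₀ + h ∈ Set.Icc a b) (hm : x₀ - h ∈ Set.Icc a b) :
    |f (x₀ + h) + f (x₀ - h) - 2 * f x₀ - h ^ 2 * f'' x₀| ≤ L / 3 * h ^ 3 := by
  obtain ⟨hx1, hx2⟩ := hx₀
  obtain ⟨hp1, hp2⟩ := hp
  obtain ⟨hm1, hm2⟩ := hm
  have mapsP : Set.MapsTo (fun t => x₀ + t) (Set.Icc 0 h) (Set.Icc a b) := fun t ht =>
    ⟨by linarith [ht.1], by linarith [ht.2]⟩
  have mapsM : Set.MapsTo (fun t => x₀ - t) (Set.Icc 0 h) (Set.Icc a b) := fun t ht =>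
    ⟨by linarith [ht.2], by linarith [ht.1]⟩
  -- For `t < h` both points `x₀ ± t` are interior, so one-sided derivatives are not needed there.
  have nhdsP : ∀ t ∈ Set.Ico 0 h, Set.Icc a b ∈ nhds (x₀ + t) := fun t ht =>
    Icc_mem_nhds (by linarith [ht.1]) (by linarith [ht.2])
  have nhdsM : ∀ t ∈ Set.Ico 0 h, Set.Icc a b ∈ nhds (x₀ - t) := fun t ht =>
    Icc_mem_nhds (by linarith [ht.2]) (by linarith [ht.1])
  have cf : ContinuousOn f (Set.Icc a b) := fun x hx => (hf' x hx).continuousWithinAt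
  have cf' : ContinuousOn f' (Set.Icc a b) := fun x hx => (hf'' x hx).continuousWithinAt
  have derP : ∀ {g g' : ℝ → ℝ},
      (∀ x ∈ Set.Icc a b, HasDerivWithinAt g (g' x) (Set.Icc a b) x) →
      ∀ t ∈ Set.Ico 0 h, HasDerivAt (fun t => g (x₀ + t)) (g' (x₀ + t)) t :=
    fun hg t ht => ((hg _ (mapsP (Set.Ico_subset_Icc_self ht))).hasDerivAt
      (nhdsP t ht)).comp_const_add x₀ t
  have derM : ∀ {g g' : ℝ → ℝ},
      (∀ x ∈ Set.Icc a b, HasDerivWithinAt g (g' x) (Set.Icc a b) x) →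
      ∀ t ∈ Set.Ico 0 h, HasDerivAt (fun t => g (x₀ - t)) (-g' (x₀ - t)) t :=
    fun hg t ht => ((hg _ (mapsM (Set.Ico_subset_Icc_self ht))).hasDerivAt
      (nhdsM t ht)).comp_const_sub x₀ t
  have contP : ∀ {g : ℝ → ℝ}, ContinuousOn g (Set.Icc a b) →
      ContinuousOn (fun t => g (x₀ + t)) (Set.Icc 0 h) :=
    fun hg => hg.comp (by fun_prop) mapsP
  have contM : ∀ {g : ℝ → ℝ}, ContinuousOn g (Set.Icc a b) →
      ContinuousOn (fun t => g (x₀ - t)) (Set.Icc 0 h) :=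
    fun hg => hg.comp (by fun_prop) mapsM
  have hsecond : ∀ t ∈ Set.Ico 0 h,
      |f'' (x₀ + t) + f'' (x₀ - t) - 2 * f'' x₀| ≤ 2 * L * t := by
    intro t ht
    have h1 := hL _ (mapsP (Set.Ico_subset_Icc_self ht)) x₀ ⟨hx1.le, hx2.le⟩
    have h2 := hL _ (mapsM (Set.Ico_subset_Icc_self ht)) x₀ ⟨hx1.le, hx2.le⟩
    simp only [add_sub_cancel_left, sub_sub_cancel_left, abs_neg, abs_of_nonneg ht.1] at h1 h2
    rw [abs_le] at *
    constructor <;> linarith [h1.1, h1.2, h2.1, h2.2]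
  have hfirst : ∀ t ∈ Set.Icc 0 h,
      |f' (x₀ + t) - f' (x₀ - t) - 2 * t * f'' x₀| ≤ L * t ^ 2 := by
    refine abs_le_of_abs_deriv_le
      (g := fun t => f' (x₀ + t) - f' (x₀ - t) - 2 * t * f'' x₀) (B := fun t => L * t ^ 2)
      (((contP cf').sub (contM cf')).sub (by fun_prop)) (fun t ht => ?_)
      (by simp) (by simp) (fun t => ?_) hsecond
    · refine (((derP hf'' t ht).sub (derM hf'' t ht)).sub
        (((hasDerivAt_id t).const_mul 2).mul_const (f'' x₀))).congr_deriv ?_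
      ring
    · refine ((hasDerivAt_pow 2 t).const_mul L).congr_deriv ?_
      norm_num
      ring
  refine abs_le_of_abs_deriv_le
    (g := fun t => f (x₀ + t) + f (x₀ - t) - 2 * f x₀ - t ^ 2 * f'' x₀)
    (B := fun t => L / 3 * t ^ 3)
    ((((contP cf).add (contM cf)).sub continuousOn_const).sub (by fun_prop)) (fun t ht => ?_)
    (by simp; ring) (by simp) (fun t => ?_)
    (fun t ht => hfirst t (Set.Ico_subset_Icc_self ht)) h ⟨hh, le_rfl⟩
  · refine ((((derP hf' t ht).add (derM hf' t ht)).sub_const (2 * f x₀)).sub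
      ((hasDerivAt_pow 2 t).mul_const (f'' x₀))).congr_deriv ?_
    norm_num
    ring
  · refine ((hasDerivAt_pow 3 t).const_mul (L / 3)).congr_deriv ?_
    norm_num
    ring


/-- The key estimate (5.2)–(5.3) used in Theorem 5.1 of Brent, "The complexity
of multiple-precision arithmetic": if `f` is twice differentiable on `[a,b]`
with `f''` Lipschitz continuous on `[a,b]` with constant `L`, and `x₀ ± h` lie
in `[a,b]` with `x₀ ∈ (a,b)`, then
`|f(x₀+h) + f(x₀−h) − 2·f(x₀) − h²·f''(x₀)| ≤ L·|h|³`. -/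
theorem second_difference_estimate (a b L x₀ h : ℝ) (f f' f'' : ℝ → ℝ)
    (hab : a < b)
    (hf' : ∀ x ∈ Set.Icc a b, HasDerivWithinAt f (f' x) (Set.Icc a b) x)
    (hf'' : ∀ x ∈ Set.Icc a b, HasDerivWithinAt f' (f'' x) (Set.Icc a b) x)
    (hL : ∀ x ∈ Set.Icc a b, ∀ y ∈ Set.Icc a b, |f'' x - f'' y| ≤ L * |x - y|)
    (hx₀ : x₀ ∈ Set.Ioo a b)
    (hp : x₀ + h ∈ Set.Icc a b) (hm : x₀ - h ∈ Set.Icc a b) :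
    |f (x₀ + h) + f (x₀ - h) - 2 * f x₀ - h ^ 2 * f'' x₀| ≤ L * |h| ^ 3 := by
  -- The Lipschitz condition on the nondegenerate interval forces `L ≥ 0`.
  have hL0 : 0 ≤ L := by
    have h1 := (abs_nonneg _).trans (hL b ⟨hab.le, le_rfl⟩ a ⟨le_rfl, hab.le⟩)
    exact nonneg_of_mul_nonneg_left h1 (abs_pos.2 (sub_ne_zero.2 hab.ne'))
  have key : |f (x₀ + h) + f (x₀ - h) - 2 * f x₀ - h ^ 2 * f'' x₀| ≤ L / 3 * |h| ^ 3 := by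
    rcases le_total 0 h with hh | hh
    · rw [abs_of_nonneg hh]
      exact second_difference_estimate_of_nonneg a b L x₀ h f f' f'' hf' hf'' hL hx₀ hh hp hm
    · rw [abs_of_nonpos hh]
      have := second_difference_estimate_of_nonneg a b L x₀ (-h) f f' f'' hf' hf'' hL hx₀
        (by linarith) (by simpa [← sub_eq_add_neg] using hm) (by simpa using hp)
      simpa only [← sub_eq_add_neg, sub_neg_eq_add, neg_sq, add_comm (f (x₀ - h))] using this
  refine key.trans ?_
  gcongr
  linarith
end

section
/- Let a and x be real numbers, let ε = a·x² − 1, and set x' = x − (1/2)·x·(ε − (3/4)·ε²) (the third-order iteration (7.6) for the inverse square root a^{−1/2}). Then a·x'² − 1 = ε³·(40 − 15·ε + 9·ε²)/64. In particular, if |ε| ≤ 1/2 then |a·x'² − 1| ≤ |ε|³. -/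
/-- The third-order iteration (7.6) of Brent, "The complexity of
multiple-precision arithmetic", for the inverse square root `a^(−1/2)`:
with `ε = a·x² − 1` and `x' = x − (1/2)·x·(ε − (3/4)·ε²)`, one has
`a·x'² − 1 = ε³·(40 − 15·ε + 9·ε²)/64`; in particular `|ε| ≤ 1/2` implies
`|a·x'² − 1| ≤ |ε|³`. -/
theorem third_order_inv_sqrt (a x ε : ℝ) (hε : ε = a * x ^ 2 - 1) :
    a * (x - (1 / 2) * x * (ε - (3 / 4) * ε ^ 2)) ^ 2 - 1 =
      ε ^ 3 * (40 - 15 * ε + 9 * ε ^ 2) / 64 ∧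
    (|ε| ≤ 1 / 2 →
      |a * (x - (1 / 2) * x * (ε - (3 / 4) * ε ^ 2)) ^ 2 - 1| ≤ |ε| ^ 3) := by
  have key : a * (x - (1 / 2) * x * (ε - (3 / 4) * ε ^ 2)) ^ 2 - 1 =
      ε ^ 3 * (40 - 15 * ε + 9 * ε ^ 2) / 64 := by
    -- Factoring `x` out of `x'` leaves `a` and `x` only in `a * x ^ 2 = 1 + ε`.
    linear_combination (-(1 - ε / 2 + 3 / 8 * ε ^ 2) ^ 2) * hε
  refine ⟨key, fun h => ?_⟩
  obtain ⟨h₁, h₂⟩ := abs_le.mp h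
  -- On `[-1/2, 1/2]` the cofactor is positive and at most `40 + 15/2 + 9/4 < 64`.
  have hc : |(40 - 15 * ε + 9 * ε ^ 2) / 64| ≤ 1 := by
    rw [abs_le]
    constructor <;> nlinarith [sq_nonneg ε]
  rw [key, mul_div_assoc, abs_mul, abs_pow]
  exact mul_le_of_le_one_right (by positivity) hc
end

section
/- Let a > 0 and λ be real numbers with 0 < λ ≤ a/2. Then |(√(a+λ) − √(a−λ))/λ − a^{−1/2}| ≤ λ²·a^{−5/2}. (Thus the inverse square root of a can be approximated using two square root extractions, a subtraction, and a division by λ, with relative error of order (λ/a)².) -/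
/-!
Write `s = √a` and `w = √(a+λ) + √(a-λ)`. Rationalizing twice gives the exact error
`(√(a+λ) - √(a-λ))/λ - 1/s = 2/w - 1/s = 4λ² / (w³ s (2s + w))`,
and `w² = 2s² + 2√(a+λ)√(a-λ) ≥ 2s²` yields `w³ (2s + w) ≥ 4s⁴`, whence the bound `λ²/s⁵`.
-/

/-- Identity (7.14) of Brent, "The complexity of multiple-precision
arithmetic": for `0 < λ ≤ a/2`,
`|(√(a+λ) − √(a−λ))/λ − a^(−1/2)| ≤ λ²·a^(−5/2)`, so an inverse square root
can be approximated by two square roots (used to show `C_QR ≤ 3`). -/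
theorem inv_sqrt_from_sqrts (a lam : ℝ) (ha : 0 < a)
    (hlam : 0 < lam) (hlam2 : lam ≤ a / 2) :
    |(Real.sqrt (a + lam) - Real.sqrt (a - lam)) / lam - a ^ (-(1 / 2) : ℝ)| ≤
      lam ^ 2 * a ^ (-(5 / 2) : ℝ) := by
  have h1 : a ^ (-(1 / 2) : ℝ) = 1 / √a := by
    rw [Real.rpow_neg ha.le, ← Real.sqrt_eq_rpow, one_div]
  have h5 : a ^ (-(5 / 2) : ℝ) = 1 / √a ^ 5 := by
    rw [Real.rpow_neg ha.le, Real.sqrt_eq_rpow, ← Real.rpow_natCast, ← Real.rpow_mul ha.le,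
      one_div]
    norm_num
  rw [h1, h5]
  have hs : 0 < √a := Real.sqrt_pos.mpr ha
  have hp : 0 < √(a + lam) := Real.sqrt_pos.mpr (by linarith)
  have hq : 0 < √(a - lam) := Real.sqrt_pos.mpr (by linarith)
  have hs2 : √a ^ 2 = a := Real.sq_sqrt ha.le
  have hp2 : √(a + lam) ^ 2 = a + lam := Real.sq_sqrt (by linarith)
  have hq2 : √(a - lam) ^ 2 = a - lam := Real.sq_sqrt (by linarith)
  generalize √a = s at *
  generalize √(a + lam) = p at *
  generalize √(a - lam) = q at *
  obtain ⟨w, hw⟩ : ∃ w, w = p + q := ⟨_, rfl⟩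
  have hw0 : 0 < w := by linarith
  have hpq : p - q = 2 * lam / w := by
    rw [eq_div_iff hw0.ne', hw]; linear_combination hp2 - hq2
  -- the parallelogram law `(p + q)² + (p - q)² = 2 (p² + q²) = 4 s²`
  have hpar : (2 * s - w) * (2 * s + w) * w ^ 2 = 4 * lam ^ 2 := by
    have h : (2 * s - w) * (2 * s + w) = (p - q) ^ 2 := by
      rw [hw]; linear_combination 4 * hs2 - 2 * hp2 - 2 * hq2
    rw [h, hpq]; field_simp; ring
  have herr : (p - q) / lam - 1 / s = 4 * lam ^ 2 / (w ^ 3 * s * (2 * s + w)) := by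
    rw [hpq, ← hpar]; field_simp
  have hw2 : 2 * s ^ 2 ≤ w ^ 2 := by
    rw [hw]; nlinarith [mul_pos hp hq]
  have hsw : s ≤ w := by nlinarith
  have hkey : 4 * s ^ 4 ≤ w ^ 3 * (2 * s + w) := by
    have h2 : 2 * s ^ 2 ≤ w * (2 * s + w) := by nlinarith
    calc 4 * s ^ 4 = (2 * s ^ 2) * (2 * s ^ 2) := by ring
      _ ≤ w ^ 2 * (w * (2 * s + w)) := by gcongr
      _ = w ^ 3 * (2 * s + w) := by ring
  rw [herr, abs_of_nonneg (by positivity), mul_one_div, div_le_div_iff₀ (by positivity)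
    (by positivity)]
  calc 4 * lam ^ 2 * s ^ 5 = lam ^ 2 * s * (4 * s ^ 4) := by ring
    _ ≤ lam ^ 2 * s * (w ^ 3 * (2 * s + w)) := by gcongr
    _ = lam ^ 2 * (w ^ 3 * s * (2 * s + w)) := by ring
end

section
/- Let a > 0, b ∈ ℝ, and λ > 0 be real numbers with λ·|b| ≤ a²/2. Then |(√(a² + λ·b) − √(a² − λ·b))/λ − b/a| ≤ λ²·|b|³/a⁵. (Thus the quotient b/a can be approximated using one squaring, two square root extractions, additions, and a division by λ.) -/
/-!
After scaling by `x = lam * b / a ^ 2`, the claim becomes `|√(1 + x) - √(1 - x) - x| ≤ |x| ^ 3`.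
With `s = √(1 + x) + √(1 - x)` one has `s * (√(1 + x) - √(1 - x)) = 2 * x`, so the error is
`x * (2 - s) / s`. Since `s ^ 2 = 2 + 2 * √(1 - x ^ 2)` and `√(1 - x ^ 2) ≥ 1 - x ^ 2`, the sum `s`
lies in `[1, 2]` and `4 - s ^ 2 ≤ 2 * x ^ 2`, whence `2 - s ≤ s * x ^ 2`.
-/

/-- The normalized case `a = lam = 1` of the estimate. It holds on the whole interval `|x| ≤ 1`. -/
lemma abs_sqrt_sub_sqrt_sub_le (x : ℝ) (hx : |x| ≤ 1) :
    |Real.sqrt (1 + x) - Real.sqrt (1 - x) - x| ≤ |x| ^ 3 := by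
  obtain ⟨h1, h2⟩ := abs_le.mp hx
  have hp := Real.sqrt_nonneg (1 + x)
  have hq := Real.sqrt_nonneg (1 - x)
  have hp2 := Real.sq_sqrt (show 0 ≤ 1 + x by linarith)
  have hq2 := Real.sq_sqrt (show 0 ≤ 1 - x by linarith)
  set p := Real.sqrt (1 + x)
  set q := Real.sqrt (1 - x)
  have hpq0 : 0 ≤ p * q := mul_nonneg hp hq
  have hpqsq : (p * q) ^ 2 = 1 - x ^ 2 := by rw [mul_pow, hp2, hq2]; ring
  have hpq1 : p * q ≤ 1 := by nlinarith [sq_nonneg (p - q)]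
  have hpq2 : 1 - x ^ 2 ≤ p * q := by nlinarith
  have hs2 : (p + q) ^ 2 = 2 + 2 * (p * q) := by linear_combination hp2 + hq2
  have hs1 : 1 ≤ p + q := by nlinarith
  have hsle : p + q ≤ 2 := by nlinarith
  have hkey : 2 - (p + q) ≤ (p + q) * x ^ 2 := by
    -- `(2 - s) * (2 + s) = 4 - s ^ 2 ≤ 2 * x ^ 2 ≤ s * (2 + s) * x ^ 2`, then cancel `2 + s`.
    refine le_of_mul_le_mul_right ?_ (show 0 < 2 + (p + q) by linarith)
    have h3 : 2 ≤ (p + q) * (2 + (p + q)) := by nlinarith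
    nlinarith [mul_le_mul_of_nonneg_right h3 (sq_nonneg x)]
  have heq : (p + q) * (p - q - x) = x * (2 - (p + q)) := by linear_combination hp2 - hq2
  refine le_of_mul_le_mul_left ?_ (show 0 < p + q by linarith)
  calc (p + q) * |p - q - x| = |(p + q) * (p - q - x)| := by
        rw [abs_mul, abs_of_nonneg (show 0 ≤ p + q by linarith)]
    _ = |x| * (2 - (p + q)) := by
        rw [heq, abs_mul, abs_of_nonneg (show 0 ≤ 2 - (p + q) by linarith)]
    _ ≤ |x| * ((p + q) * x ^ 2) := mul_le_mul_of_nonneg_left hkey (abs_nonneg x)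
    _ = (p + q) * |x| ^ 3 := by rw [← sq_abs x]; ring

/-- Identity (7.17) of Brent, "The complexity of multiple-precision
arithmetic": for `a > 0`, `λ > 0` with `λ·|b| ≤ a²/2`,
`|(√(a² + λb) − √(a² − λb))/λ − b/a| ≤ λ²·|b|³/a⁵`, so a quotient can be
approximated by a squaring and two square roots (used to show `C_DR ≤ 7.5`). -/
theorem div_from_sqrts (a b lam : ℝ) (ha : 0 < a) (hlam : 0 < lam)
    (hsmall : lam * |b| ≤ a ^ 2 / 2) :
    |(Real.sqrt (a ^ 2 + lam * b) - Real.sqrt (a ^ 2 - lam * b)) / lam - b / a| ≤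
      lam ^ 2 * |b| ^ 3 / a ^ 5 := by
  have ha2 : 0 < a ^ 2 := by positivity
  have hx : |lam * b / a ^ 2| ≤ 1 := by
    rw [abs_div, abs_mul, abs_of_pos hlam, abs_of_pos ha2, div_le_one ha2]
    linarith
  have hmain := abs_sqrt_sub_sqrt_sub_le _ hx
  have hp : Real.sqrt (a ^ 2 + lam * b) = a * Real.sqrt (1 + lam * b / a ^ 2) := by
    rw [show a ^ 2 + lam * b = a ^ 2 * (1 + lam * b / a ^ 2) by field_simp,
      Real.sqrt_mul ha2.le, Real.sqrt_sq ha.le]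
  have hq : Real.sqrt (a ^ 2 - lam * b) = a * Real.sqrt (1 - lam * b / a ^ 2) := by
    rw [show a ^ 2 - lam * b = a ^ 2 * (1 - lam * b / a ^ 2) by field_simp,
      Real.sqrt_mul ha2.le, Real.sqrt_sq ha.le]
  rw [hp, hq]
  generalize Real.sqrt (1 + lam * b / a ^ 2) = p at hmain ⊢
  generalize Real.sqrt (1 - lam * b / a ^ 2) = q at hmain ⊢
  calc |(a * p - a * q) / lam - b / a| = |a / lam * (p - q - lam * b / a ^ 2)| := by
        congr 1
        field_simp
    _ = a / lam * |p - q - lam * b / a ^ 2| := by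
        rw [abs_mul, abs_of_pos (div_pos ha hlam)]
    _ ≤ a / lam * |lam * b / a ^ 2| ^ 3 :=
        mul_le_mul_of_nonneg_left hmain (div_pos ha hlam).le
    _ = lam ^ 2 * |b| ^ 3 / a ^ 5 := by
        rw [abs_div, abs_mul, abs_of_pos hlam, abs_of_pos ha2]
        field_simp
end

section
/- Let a and λ be real numbers with λ ≠ 0 and |λ·a| ≤ 1/4. Then |2·λ^{−2}·(1 + λ·a − √(1 + 2·λ·a)) − a²| ≤ 2·|λ|·|a|³. (Thus the square a² can be approximated using a single square root extraction, additions, and multiplications by powers of λ.) -/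
/-!
Put `x = λ a`, `s = √(1 + 2x)` and `d = s - 1`. Since `s² = 1 + 2x`, the quantity `2 (1 + x - s)` is
the perfect square `d²`, while `x = d (s + 1) / 2`. Hence `d² - x² = -d³ (s + 3) / 4`, and the bound
`|d² - x²| ≤ 2 |x|³ = |d|³ (s + 1)³ / 4` reduces to `s + 3 ≤ (s + 1)³`, which holds because
`x ≥ -1/4` forces `s ≥ √(1/2) > 7/10`. Dividing by `λ²` gives the theorem.
-/

/-- The scale-free form of the estimate, in the variable `x = λ a`. -/
theorem abs_two_mul_sub_sqrt_sub_sq_le (x : ℝ) (hx : |x| ≤ 1 / 4) :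
    |2 * (1 + x - Real.sqrt (1 + 2 * x)) - x ^ 2| ≤ 2 * |x| ^ 3 := by
  have hlow := (abs_le.mp hx).1
  have hs2 : Real.sqrt (1 + 2 * x) ^ 2 = 1 + 2 * x := Real.sq_sqrt (by linarith)
  have hs : 7 / 10 ≤ Real.sqrt (1 + 2 * x) := Real.le_sqrt_of_sq_le (by linarith)
  generalize Real.sqrt (1 + 2 * x) = s at hs2 hs ⊢
  obtain rfl : x = (s - 1) * (s + 1) / 2 := by linarith
  have hl : 2 * (1 + (s - 1) * (s + 1) / 2 - s) - ((s - 1) * (s + 1) / 2) ^ 2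
      = -((s - 1) ^ 3 * ((s + 3) / 4)) := by ring
  have hr : |(s - 1) * (s + 1) / 2| = |s - 1| * ((s + 1) / 2) := by
    rw [mul_div_assoc, abs_mul, abs_of_pos (by linarith : 0 < (s + 1) / 2)]
  rw [hl, hr, abs_neg, abs_mul, abs_pow, abs_of_pos (by linarith : 0 < (s + 3) / 4)]
  have hcubic : (s + 3) / 4 ≤ (s + 1) ^ 3 / 4 := by
    nlinarith [mul_nonneg (by linarith : 0 ≤ s) (sq_nonneg s)]
  calc |s - 1| ^ 3 * ((s + 3) / 4) ≤ |s - 1| ^ 3 * ((s + 1) ^ 3 / 4) := by gcongr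
    _ = 2 * (|s - 1| * ((s + 1) / 2)) ^ 3 := by ring

/-- The approximation underlying Lemma 3.8 of Brent, "The complexity of
multiple-precision arithmetic": for `λ ≠ 0` with `|λ·a| ≤ 1/4`,
`|2·λ^(−2)·(1 + λ·a − √(1 + 2·λ·a)) − a²| ≤ 2·|λ|·|a|³`, so squaring is
linearly reducible to square root extraction (`M ≼ R`). -/
theorem square_from_sqrt (a lam : ℝ) (hlam : lam ≠ 0)
    (hsmall : |lam * a| ≤ 1 / 4) :
    |2 * (lam ^ 2)⁻¹ * (1 + lam * a - Real.sqrt (1 + 2 * lam * a)) - a ^ 2| ≤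
      2 * |lam| * |a| ^ 3 := by
  have key := abs_two_mul_sub_sqrt_sub_sq_le (lam * a) hsmall
  rw [← mul_assoc 2 lam a] at key
  have hpos : 0 < lam ^ 2 := by positivity
  refine le_of_mul_le_mul_left ?_ hpos
  calc lam ^ 2 * |2 * (lam ^ 2)⁻¹ * (1 + lam * a - Real.sqrt (1 + 2 * lam * a)) - a ^ 2|
      = |2 * (1 + lam * a - Real.sqrt (1 + 2 * lam * a)) - (lam * a) ^ 2| := by
        rw [← abs_of_pos hpos, ← abs_mul, abs_of_pos hpos]
        congr 1
        field_simp
    _ ≤ 2 * |lam * a| ^ 3 := key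
    _ = lam ^ 2 * (2 * |lam| * |a| ^ 3) := by
        rw [abs_mul, ← sq_abs lam]
        ring
end

section
/- For every integer k ≥ 2, the unique real root p > 0 of p^{k+1} = 1 + p^k satisfies p^k > 2; equivalently, p^{−1} > 2·p^{−(k+1)}. -/
/-- Inequalities (8.30)–(8.31) of Brent, "The complexity of multiple-precision
arithmetic": for every integer `k ≥ 2`, the positive real root `p` of
`p^(k+1) = 1 + p^k` satisfies `p^k > 2`, equivalently `p⁻¹ > 2·p^(−(k+1))`. -/
theorem secant_order_pow_gt_two (k : ℕ) (hk : 2 ≤ k) (p : ℝ) (hp : 0 < p)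
    (hroot : p ^ (k + 1) = 1 + p ^ k) :
    2 < p ^ k ∧ 2 * (p ^ (k + 1))⁻¹ < p⁻¹ := by
  have hpos : 0 < p ^ k := pow_pos hp k
  have hmul : p ^ k * (p - 1) = 1 := by
    rw [pow_succ] at hroot
    linarith
  have hgt : 2 < p ^ k := by
    -- If `p ^ k ≤ 2`, then `p - 1 = 1 / p ^ k ≥ 1 / 2`, so `p ^ k ≥ p ^ 2 ≥ 9 / 4`.
    by_contra! hle
    have hp1 : 0 < p - 1 := pos_of_mul_pos_right (hmul.symm ▸ one_pos : 0 < p ^ k * (p - 1)) hpos.le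
    have hp32 : 3 / 2 ≤ p := by nlinarith
    have hsq : p ^ 2 ≤ p ^ k := pow_le_pow_right₀ (by linarith) hk
    nlinarith
  refine ⟨hgt, ?_⟩
  rw [pow_succ, mul_inv, ← mul_assoc, ← div_eq_mul_inv 2]
  exact mul_lt_of_lt_one_left (inv_pos.mpr hp) ((div_lt_one hpos).mpr hgt)
end

section
/- Let k ≥ 2 be an integer and let p > 1 be the real root of p^{k+1} = 1 + p^k. Then, as α → +∞ through real values, C_S(k, α) − 1 is asymptotically equivalent to p^{−α}; that is, ((1 − p^{−kα} + (2·p^{−(k+1)})^α)/(1 − p^{−α}) − 1)·p^α tends to 1 as α → +∞. -/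
/-!
Put `x = p ^ (-α)`. Since `C - 1 = (x - p ^ (-kα) + (2 / p ^ (k+1)) ^ α) / (1 - x)`, multiplying by
`p ^ α` turns the expression into `(1 - (p ^ (1-k)) ^ α + (2 / p ^ k) ^ α) / (1 - (p⁻¹) ^ α)`.
The three powers of `α` tend to `0` because their bases lie in `(0, 1)` (for `p ^ (1-k)` as
`k ≥ 2`). The only base for which
this is not immediate is `2 / p ^ k`, and `2 < p ^ k` is `two_lt_pow_of_root`: the equation reads
`p ^ k * (p - 1) = 1`, and `3 / 2 ≤ p` would make the left side at least `9 / 8`.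
-/

/-- False for `k = 1`, where the root is the golden ratio, which is less than `2`. -/
lemma two_lt_pow_of_root (k : ℕ) (hk : 2 ≤ k) (p : ℝ) (hp : 1 < p)
    (hroot : p ^ (k + 1) = 1 + p ^ k) : 2 < p ^ k := by
  have h1 : p ^ k * (p - 1) = 1 := by rw [pow_succ] at hroot; linarith
  have h2 : p ^ 2 ≤ p ^ k := pow_le_pow_right₀ hp.le hk
  have h3 : p < 3 / 2 := by
    by_contra! h
    nlinarith
  nlinarith [pow_pos (zero_lt_one.trans hp) k]

theorem secant_constant_asymptotics (k : ℕ) (hk : 2 ≤ k) (p : ℝ) (hp : 1 < p)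
    (hroot : p ^ (k + 1) = 1 + p ^ k) :
    Filter.Tendsto
      (fun α : ℝ =>
        ((1 - p ^ (-(k : ℝ) * α) + (2 * (p ^ (k + 1))⁻¹) ^ α) /
            (1 - p ^ (-α)) - 1) * p ^ α)
      Filter.atTop (nhds 1) := by
  have h0 : 0 < p := zero_lt_one.trans hp
  have hpk := two_lt_pow_of_root k hk p hp hroot
  have hk' : (2 : ℝ) ≤ k := by exact_mod_cast hk
  have key : ∀ b : ℝ, 0 < b → b < 1 →
      Filter.Tendsto (fun α : ℝ => b ^ α) Filter.atTop (nhds 0) := fun b hb hb1 =>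
    tendsto_rpow_atTop_of_base_lt_one b (by linarith) hb1
  have ta := key (p ^ (1 - (k : ℝ))) (by positivity)
    (Real.rpow_lt_one_of_one_lt_of_neg hp (by linarith))
  have tb := key (2 * (p ^ k)⁻¹) (by positivity)
    (by rw [← div_eq_mul_inv, div_lt_one (by positivity)]; exact hpk)
  have tc := key p⁻¹ (by positivity) (inv_lt_one_of_one_lt₀ hp)
  have t := ((ta.const_sub 1).add tb).div (tc.const_sub 1) (by norm_num)
  simp only [sub_zero, add_zero, div_one] at t
  refine t.congr' ?_
  filter_upwards [Filter.eventually_gt_atTop 0] with α hα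
  have hx : p ^ (-α) < 1 := Real.rpow_lt_one_of_one_lt_of_neg hp (by linarith)
  have e1 : (p ^ (1 - (k : ℝ))) ^ α = p ^ (-(k : ℝ) * α) * p ^ α := by
    rw [← Real.rpow_mul h0.le, ← Real.rpow_add h0]
    congr 1
    ring
  have e2 : (2 * (p ^ k)⁻¹) ^ α = (2 * (p ^ (k + 1))⁻¹) ^ α * p ^ α := by
    rw [← Real.mul_rpow (by positivity) h0.le]
    congr 1
    rw [pow_succ]
    field_simp
  have e3 : p⁻¹ ^ α = p ^ (-α) := by
    rw [Real.inv_rpow h0.le, Real.rpow_neg h0.le]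
  have e4 : p ^ (-α) * p ^ α = 1 := by
    rw [← Real.rpow_add h0, neg_add_cancel, Real.rpow_zero]
  have hne : 1 - p ^ (-α) ≠ 0 := by linarith
  simp only [Pi.div_apply]
  rw [e1, e2, e3, div_sub_one hne, div_mul_eq_mul_div]
  congr 1
  linear_combination -e4
end
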